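/- For every τ in the complex upper half-plane, with q = e^{2πiτ}, the identity η(4τ)⁹η(12τ)⁹ / (η(2τ)³η(6τ)³η(8τ)³η(24τ)³) = Σ_{m,n∈ℤ} [ ((m² − 12n²)/2) · q^{m²+12n²} + ((3m² − 4n²)/2) · q^{3m²+4n²} ] holds, where the double series converges absolutely. -/

import Mathlib

/-!
Write `E(x) = ∏ (1 - xⁿ)` and `q = e^{2πiτ}`.

*The eta quotient.* Separating odd and even exponents in `E` gives `E(-p) E(p) E(p⁴) = E(p²)³`
(`eulerE_neg`). For `p = q²` and `p = q⁶` this turns the left-hand side into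
`q E(-q²)³ E(-q⁶)³`.

*Jacobi's identity.* `2 E(x)³ = ∑_{k ∈ ℤ} (-1)^k (2k + 1) x^{k(k+1)/2}` (`jacobi_cube`) is the limit
of a finite identity: the coefficients of `(1 - 1/z) ∏_{i ≤ n} (1 - z xⁱ)(1 - xⁱ/z)` satisfy a
three-term recursion (`jcoeff_succ`), from which the sum of `2k + 1` times the `k`-th coefficient
picks up the factor `(1 - x^{n+1})²` when `n` grows by one (`hasSum_jcoeff`); the limit is taken by
dominated convergence. It is used in the variable `y` with `x = y²`, which makes all exponents
integers without division; for `x = -q²` and `x = -q⁶` one takes `y = iq` and `y = iq³`.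

*The double series.* Four times the left-hand side is thus a sum over pairs of odd integers
`2a + 1`, `2b + 1`, with `q` raised to a quarter of `(2a + 1)² + 3 (2b + 1)²`. The involution
`2b + 1 ↦ -(2b + 1)` reduces to `a ≡ b mod 2`, where `2a + 1 = u + 3v`, `2b + 1 = u - v` and the
exponent becomes `u² + 3v²` with `u + v` odd (`fterm_diag`). The sign is `(-1)^v`, and the coefficient
`(u + 3v)(u - v) = (u² - 3v²) + 2uv` loses its mixed part by symmetry (`tsum_fterm`). On the
right-hand side the summands with `m` even cancel between the two forms, and those with `m` odd
are the same two series (`hasSum_theta_pair`).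
-/

/-- The Dedekind eta function `η(τ) = q^{1/24} ∏_{n ≥ 1} (1 - qⁿ)`, `q = e^{2πiτ}`. -/
noncomputable def dedekindEta (τ : ℂ) : ℂ :=
  Complex.exp (2 * (Real.pi : ℂ) * Complex.I * τ / 24) *
    ∏' n : ℕ, (1 - Complex.exp (2 * (Real.pi : ℂ) * Complex.I * τ) ^ (n + 1))


open Filter Topology

/-! ### The finite form of Jacobi's identity -/

/-- The finite `q`-Pochhammer symbol `(x; x)_n = ∏_{i=1}^n (1 - x^i)`. -/
noncomputable def poch (x : ℂ) (n : ℕ) : ℂ := ∏ i ∈ Finset.range n, (1 - x ^ (i + 1))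

/-- The reciprocal `1 / (x; x)_m`, extended to all integers `m` by `0` at negative `m`. -/
noncomputable def rpoch (x : ℂ) (m : ℤ) : ℂ := if m < 0 then 0 else (poch x m.toNat)⁻¹

/-- The Euler product `∏_{n ≥ 1} (1 - x^n)`. -/
noncomputable def eulerE (x : ℂ) : ℂ := ∏' n : ℕ, (1 - x ^ (n + 1))

/-- The coefficient of `z^k` in `(1 - 1/z) ∏_{i=1}^n (1 - z x^i) (1 - x^i / z)`, where `x = y^2`. -/
noncomputable def jcoeff (y : ℂ) (n : ℕ) (k : ℤ) : ℂ :=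
  (-1) ^ k * y ^ (k ^ 2 + k) * poch (y ^ 2) (2 * n + 1) *
    (rpoch (y ^ 2) (n - k) * rpoch (y ^ 2) (n + k + 1))

lemma one_sub_pow_ne_zero {x : ℂ} (hx : ‖x‖ < 1) (n : ℕ) : 1 - x ^ (n + 1) ≠ 0 := by
  intro h
  have h1 : ‖x ^ (n + 1)‖ = 1 := by rw [← sub_eq_zero.mp h, norm_one]
  rw [norm_pow] at h1
  exact (pow_lt_one₀ (norm_nonneg x) hx (Nat.succ_ne_zero n)).ne h1

lemma poch_ne_zero {x : ℂ} (hx : ‖x‖ < 1) (n : ℕ) : poch x n ≠ 0 :=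
  Finset.prod_ne_zero_iff.mpr fun i _ => one_sub_pow_ne_zero hx i

lemma poch_succ (x : ℂ) (n : ℕ) : poch x (n + 1) = poch x n * (1 - x ^ (n + 1)) :=
  Finset.prod_range_succ _ _

/-- The recursion holds at every integer: at `m = 0` the factor `1 - x^0` vanishes. -/
lemma rpoch_sub_one {x : ℂ} (hx : ‖x‖ < 1) (m : ℤ) :
    rpoch x (m - 1) = (1 - x ^ m) * rpoch x m := by
  rcases lt_trichotomy m 0 with h | h | h
  · simp [rpoch, h, show m - 1 < 0 by omega]
  · subst h; simp [rpoch]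
  · obtain ⟨n, rfl⟩ : ∃ n : ℕ, m = n + 1 := ⟨(m - 1).toNat, by omega⟩
    have h0 : ((n : ℤ) + 1).toNat = n + 1 := by omega
    have h1 := poch_ne_zero hx n
    have h2 := one_sub_pow_ne_zero hx n
    have h3 : ¬ ((n : ℤ) + 1 < 0) := by omega
    have h4 : x ^ ((n : ℤ) + 1) = x ^ (n + 1) := by exact_mod_cast zpow_natCast x (n + 1)
    simp only [rpoch, add_sub_cancel_right, h0, h3, h4, poch_succ, if_false, Int.toNat_natCast]
    simp only [not_lt.mpr (Int.natCast_nonneg n), if_false]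
    field_simp

/-- Multiplying the generating polynomial by `(1 - z x^{n+1}) (1 - x^{n+1} / z)`. -/
lemma jcoeff_succ {y : ℂ} (hy : ‖y‖ < 1) (hy0 : y ≠ 0) (n : ℕ) (k : ℤ) :
    jcoeff y (n + 1) k = (1 + (y ^ 2) ^ (2 * n + 2)) * jcoeff y n k -
      (y ^ 2) ^ (n + 1) * (jcoeff y n (k - 1) + jcoeff y n (k + 1)) := by
  have hx : ‖y ^ 2‖ < 1 := by
    rw [norm_pow]; exact pow_lt_one₀ (norm_nonneg y) hy two_ne_zero
  have hx0 : y ^ 2 ≠ 0 := pow_ne_zero 2 hy0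
  unfold jcoeff
  have e1 : poch (y ^ 2) (2 * (n + 1) + 1) = poch (y ^ 2) (2 * n + 1) *
      (1 - (y ^ 2) ^ (2 * n + 2)) * (1 - (y ^ 2) ^ (2 * n + 3)) := by
    rw [show 2 * (n + 1) + 1 = 2 * n + 1 + 1 + 1 by ring, poch_succ, poch_succ]
  have s1 := rpoch_sub_one hx (n + 1 - k)
  have s2 := rpoch_sub_one hx (n + k + 2)
  have s3 := rpoch_sub_one hx (n - k)
  have s4 := rpoch_sub_one hx (n + k + 1)
  rw [show (n : ℤ) + 1 - k - 1 = n - k by ring] at s1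
  rw [show (n : ℤ) + k + 2 - 1 = n + k + 1 by ring] at s2
  rw [show (n : ℤ) + k + 1 - 1 = n + k by ring] at s4
  rw [show (n : ℤ) - (k - 1) = n + 1 - k by ring, show (n : ℤ) + (k - 1) + 1 = n + k by ring,
    show (n : ℤ) - (k + 1) = n - k - 1 by ring, show (n : ℤ) + (k + 1) + 1 = n + k + 2 by ring,
    show ((n + 1 : ℕ) : ℤ) - k = n + 1 - k by push_cast; ring,
    show ((n + 1 : ℕ) : ℤ) + k + 1 = n + k + 2 by push_cast; ring, s3, s4, s1, s2, e1]
  have p1 : y ^ ((k - 1) ^ 2 + (k - 1)) = y ^ (k ^ 2 + k) * ((y ^ 2) ^ k)⁻¹ := by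
    rw [← zpow_natCast y 2, ← zpow_mul, ← zpow_neg, ← zpow_add₀ hy0]; congr 1; push_cast; ring
  have p2 : y ^ ((k + 1) ^ 2 + (k + 1)) = y ^ (k ^ 2 + k) * ((y ^ 2) ^ k * y ^ 2) := by
    rw [← zpow_natCast y 2, ← zpow_mul, ← zpow_add₀ hy0, ← zpow_add₀ hy0]
    congr 1; push_cast; ring
  have p3 : (-1 : ℂ) ^ (k - 1) = - (-1) ^ k := by
    rw [zpow_sub_one₀ (by norm_num)]; norm_num
  have p4 : (-1 : ℂ) ^ (k + 1) = - (-1) ^ k := by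
    rw [zpow_add_one₀ (by norm_num)]; norm_num
  rw [p1, p2, p3, p4]
  generalize y ^ (k ^ 2 + k) = A
  generalize (-1 : ℂ) ^ k = B
  generalize rpoch (y ^ 2) (n + 1 - k) = U
  generalize rpoch (y ^ 2) (n + k + 2) = V
  generalize poch (y ^ 2) (2 * n + 1) = P
  revert hx0
  generalize y ^ 2 = x
  intro hx0
  have hK0 : x ^ k ≠ 0 := zpow_ne_zero k hx0
  have q1 : x ^ ((n : ℤ) + 1 - k) = x ^ n * x * (x ^ k)⁻¹ := by
    rw [zpow_sub₀ hx0, zpow_add_one₀ hx0, zpow_natCast]; rfl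
  have q2 : x ^ ((n : ℤ) - k) = x ^ n * (x ^ k)⁻¹ := by
    rw [zpow_sub₀ hx0, zpow_natCast]; rfl
  have q3 : x ^ ((n : ℤ) + k + 2) = x ^ n * x ^ k * x ^ 2 := by
    rw [zpow_add₀ hx0, zpow_add₀ hx0, zpow_natCast]; rfl
  have q4 : x ^ ((n : ℤ) + k + 1) = x ^ n * x ^ k * x := by
    rw [zpow_add_one₀ hx0, zpow_add₀ hx0, zpow_natCast]
  rw [q1, q2, q3, q4]
  have q5 : x ^ (2 * n + 2) = (x ^ n) ^ 2 * x ^ 2 := by ring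
  have q6 : x ^ (2 * n + 3) = (x ^ n) ^ 2 * x ^ 3 := by ring
  have q7 : x ^ (n + 1) = x ^ n * x := by ring
  rw [q5, q6, q7]
  revert hK0
  generalize x ^ k = K
  generalize x ^ n = N
  intro hK0
  field_simp
  ring

/-- The finite form of Jacobi's identity, i.e. the derivative of the generating polynomial at `z = 1`.
Summability of the coefficients is carried along so that the recursion can be summed. -/
lemma hasSum_jcoeff {y : ℂ} (hy : ‖y‖ < 1) (hy0 : y ≠ 0) (n : ℕ) :
    (∃ s, HasSum (jcoeff y n) s) ∧
      HasSum (fun k : ℤ => (2 * (k : ℂ) + 1) * jcoeff y n k) (2 * poch (y ^ 2) n ^ 2) := by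
  have hx : ‖y ^ 2‖ < 1 := by
    rw [norm_pow]; exact pow_lt_one₀ (norm_nonneg y) hy two_ne_zero
  induction n with
  | zero =>
    have hz : ∀ k : ℤ, k ∉ ({0, -1} : Finset ℤ) → jcoeff y 0 k = 0 := by
      intro k hk
      simp only [Finset.mem_insert, Finset.mem_singleton, not_or] at hk
      rcases lt_or_gt_of_ne hk.1 with h | h
      · have : k + 1 < 0 := by omega
        simp [jcoeff, rpoch, this]
      · simp [jcoeff, rpoch, h]
    have h1 := one_sub_pow_ne_zero hx 0
    have h0 : jcoeff y 0 0 = 1 := by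
      simp [jcoeff, rpoch, poch] at h1 ⊢; field_simp
    have h0' : jcoeff y 0 (-1) = -1 := by
      simp [jcoeff, rpoch, poch] at h1 ⊢; field_simp; ring
    refine ⟨⟨_, hasSum_sum_of_ne_finset_zero (L := .unconditional ℤ) hz⟩, ?_⟩
    have := hasSum_sum_of_ne_finset_zero (f := fun k : ℤ => (2 * (k : ℂ) + 1) * jcoeff y 0 k)
      (s := {0, -1}) (L := .unconditional ℤ) (fun k hk => by simp [hz k hk])
    convert this using 1
    simp [h0, h0', poch]
  | succ n ih =>
    obtain ⟨⟨s, hs⟩, hd⟩ := ih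
    have m1 : HasSum (fun k : ℤ => jcoeff y n (k - 1)) s := by
      simpa [Function.comp_def] using (Equiv.subRight (1 : ℤ)).hasSum_iff.mpr hs
    have p1 : HasSum (fun k : ℤ => jcoeff y n (k + 1)) s := by
      simpa [Function.comp_def] using (Equiv.addRight (1 : ℤ)).hasSum_iff.mpr hs
    have m2 := (Equiv.subRight (1 : ℤ)).hasSum_iff.mpr hd
    have p2 := (Equiv.addRight (1 : ℤ)).hasSum_iff.mpr hd
    constructor
    · have h := (hs.mul_left (1 + (y ^ 2) ^ (2 * n + 2))).sub
        ((m1.add p1).mul_left ((y ^ 2) ^ (n + 1)))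
      exact ⟨_, h.congr_fun fun k => jcoeff_succ hy hy0 n k⟩
    · have := (hd.mul_left (1 + (y ^ 2) ^ (2 * n + 2))).sub
        (((m2.add (m1.mul_left 2)).add (p2.sub (p1.mul_left 2))).mul_left ((y ^ 2) ^ (n + 1)))
      have e : 2 * poch (y ^ 2) (n + 1) ^ 2 = (1 + (y ^ 2) ^ (2 * n + 2)) *
          (2 * poch (y ^ 2) n ^ 2) - (y ^ 2) ^ (n + 1) * (2 * poch (y ^ 2) n ^ 2 + 2 * s +
            (2 * poch (y ^ 2) n ^ 2 - 2 * s)) := by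
        rw [poch_succ]; ring
      rw [e]
      refine this.congr_fun fun k => ?_
      rw [jcoeff_succ hy hy0]
      simp only [Function.comp_apply, Equiv.subRight_apply, Equiv.coe_addRight]
      push_cast
      ring

/-! ### Jacobi's identity for the cube of the Euler product -/

lemma tendsto_poch {x : ℂ} (hx : ‖x‖ < 1) : Tendsto (poch x) atTop (𝓝 (eulerE x)) :=
  (ModularForm.multipliable_one_sub_pow hx).hasProd.tendsto_prod_nat

lemma eulerE_ne_zero {x : ℂ} (hx : ‖x‖ < 1) : eulerE x ≠ 0 := by
  refine tprod_one_add_ne_zero_of_summable (f := fun n : ℕ ↦ -x ^ (n + 1)) ?_ ?_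
  · exact fun i ↦ by simpa [← sub_eq_add_neg] using one_sub_pow_ne_zero hx i
  · simpa using (summable_nat_add_iff 1).mpr (summable_geometric_of_lt_one (norm_nonneg x) hx)

lemma tendsto_rpoch {x : ℂ} (hx : ‖x‖ < 1) : Tendsto (rpoch x) atTop (𝓝 (eulerE x)⁻¹) := by
  have h : Tendsto (fun m : ℤ => (poch x m.toNat)⁻¹) atTop (𝓝 (eulerE x)⁻¹) :=
    ((tendsto_poch hx).comp (g := poch x) (f := Int.toNat)
      (tendsto_atTop_atTop.mpr fun b => ⟨b, fun a h => by omega⟩)).inv₀ (eulerE_ne_zero hx)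
  refine h.congr' ?_
  filter_upwards [eventually_ge_atTop 0] with m hm
  simp [rpoch, not_lt.mpr hm]

lemma rpoch_bounded {x : ℂ} (hx : ‖x‖ < 1) : ∃ C, 0 ≤ C ∧ ∀ m, ‖rpoch x m‖ ≤ C := by
  obtain ⟨C, hC⟩ := (((tendsto_poch hx).inv₀ (eulerE_ne_zero hx)).norm).bddAbove_range
  have hC' : ∀ n, ‖(poch x n)⁻¹‖ ≤ C := fun n => hC ⟨n, rfl⟩
  have h0 : 0 ≤ C := (norm_nonneg _).trans (hC' 0)
  refine ⟨C, h0, fun m => ?_⟩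
  unfold rpoch
  split_ifs
  · simpa using h0
  · exact hC' _

/-- With `T = -c log ‖y‖ / π > 0` this is Mathlib's bound for the terms of the Jacobi theta function;
the linear term of the exponent is absorbed in its parameter `S`. -/
lemma summable_theta {y : ℂ} (hy : ‖y‖ < 1) (hy0 : y ≠ 0) (c d : ℤ) (hc : 0 < c) (k : ℕ) :
    Summable fun n : ℤ => ‖(n : ℂ) ^ k * y ^ (c * n ^ 2 + d * n)‖ := by
  have hpos : 0 < ‖y‖ := norm_pos_iff.mpr hy0
  have hlog : Real.log ‖y‖ < 0 := Real.log_neg hpos hy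
  have hc' : (0 : ℝ) < c := by exact_mod_cast hc
  have := summable_pow_mul_jacobiTheta₂_term_bound
    (-Real.log ‖y‖ * |(d : ℝ)| / (2 * Real.pi)) (T := -Real.log ‖y‖ * c / Real.pi)
    (by have := Real.pi_pos; have : 0 < -Real.log ‖y‖ := by linarith
        positivity) k
  refine this.of_norm_bounded fun n => ?_
  rw [norm_norm, norm_mul, norm_pow, norm_zpow, Complex.norm_intCast]
  push_cast
  refine mul_le_mul_of_nonneg_left ?_ (by positivity)
  rw [← Real.rpow_intCast, Real.rpow_def_of_pos hpos]
  refine Real.exp_le_exp.mpr ?_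
  have e : -Real.pi * (-Real.log ‖y‖ * c / Real.pi * (n : ℝ) ^ 2 -
      2 * (-Real.log ‖y‖ * |(d : ℝ)| / (2 * Real.pi)) * |(n : ℝ)|) =
      Real.log ‖y‖ * (c * n ^ 2 - |(d : ℝ) * n|) := by
    rw [abs_mul]; field_simp; ring
  rw [e]
  push_cast
  have := neg_abs_le ((d : ℝ) * n)
  nlinarith

/-- Jacobi's identity `2 ∏ (1 - x^n)^3 = ∑_{k ∈ ℤ} (-1)^k (2k+1) x^{k(k+1)/2}`, with `x = y^2`. -/
theorem jacobi_cube {y : ℂ} (hy : ‖y‖ < 1) (hy0 : y ≠ 0) :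
    HasSum (fun k : ℤ => (2 * (k : ℂ) + 1) * ((-1) ^ k * y ^ (k ^ 2 + k)))
      (2 * eulerE (y ^ 2) ^ 3) := by
  have hx : ‖y ^ 2‖ < 1 := by
    rw [norm_pow]; exact pow_lt_one₀ (norm_nonneg y) hy two_ne_zero
  have hE := eulerE_ne_zero hx
  have hsum : Summable fun k : ℤ => ‖(2 * (k : ℂ) + 1) * ((-1) ^ k * y ^ (k ^ 2 + k))‖ := by
    refine (((summable_theta hy hy0 1 1 one_pos 1).mul_left 2).add
      (summable_theta hy hy0 1 1 one_pos 0)).of_nonneg_of_le (fun _ => norm_nonneg _) fun k => ?_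
    have : (2 * (k : ℂ) + 1) * ((-1) ^ k * y ^ (k ^ 2 + k)) = (-1) ^ k *
      (2 * ((k : ℂ) ^ 1 * y ^ (1 * k ^ 2 + 1 * k)) + (k : ℂ) ^ 0 * y ^ (1 * k ^ 2 + 1 * k)) := by
      simp only [one_mul, pow_zero, pow_one]; ring
    rw [this, norm_mul, norm_zpow, norm_neg, norm_one, one_zpow, one_mul]
    refine (norm_add_le _ _).trans ?_
    rw [norm_mul 2]
    simp
  obtain ⟨C, hC0, hC⟩ := rpoch_bounded hx
  obtain ⟨D, hD⟩ := ((tendsto_poch hx).norm).bddAbove_range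
  have hD' : ∀ n, ‖poch (y ^ 2) n‖ ≤ D := fun n => hD ⟨n, rfl⟩
  have hD0 : 0 ≤ D := (norm_nonneg _).trans (hD' 0)
  have lim : Tendsto (fun n => ∑' k : ℤ, (2 * (k : ℂ) + 1) * jcoeff y n k) atTop
      (𝓝 (∑' k : ℤ, (2 * (k : ℂ) + 1) * ((-1) ^ k * y ^ (k ^ 2 + k)) * (eulerE (y ^ 2))⁻¹)) := by
    refine tendsto_tsum_of_dominated_convergence (hsum.mul_right (D * (C * C))) ?_ ?_
    · intro k
      have t1 : Tendsto (fun n : ℕ => rpoch (y ^ 2) (n - k)) atTop (𝓝 (eulerE (y ^ 2))⁻¹) :=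
        (tendsto_rpoch hx).comp
          (tendsto_atTop_add_const_right _ (-k) tendsto_natCast_atTop_atTop)
      have t2 : Tendsto (fun n : ℕ => rpoch (y ^ 2) (n + k + 1)) atTop
          (𝓝 (eulerE (y ^ 2))⁻¹) :=
        (tendsto_rpoch hx).comp (tendsto_atTop_add_const_right _ 1
          (tendsto_atTop_add_const_right _ k tendsto_natCast_atTop_atTop))
      have t3 : Tendsto (fun n : ℕ => poch (y ^ 2) (2 * n + 1)) atTop (𝓝 (eulerE (y ^ 2))) :=
        (tendsto_poch hx).comp (tendsto_atTop_atTop.mpr fun b => ⟨b, fun a h => by omega⟩)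
      have := ((t3.mul (t1.mul t2)).const_mul
        ((2 * (k : ℂ) + 1) * ((-1) ^ k * y ^ (k ^ 2 + k))))
      convert this using 1
      · funext n; unfold jcoeff; ring
      · congr 1; field_simp
    · refine Eventually.of_forall fun n k => ?_
      rw [show (2 * (k : ℂ) + 1) * jcoeff y n k = (2 * (k : ℂ) + 1) * ((-1) ^ k * y ^ (k ^ 2 + k)) *
        (poch (y ^ 2) (2 * n + 1) * (rpoch (y ^ 2) (n - k) * rpoch (y ^ 2) (n + k + 1))) by
          unfold jcoeff; ring, norm_mul]
      refine mul_le_mul_of_nonneg_left ?_ (norm_nonneg _)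
      rw [norm_mul, norm_mul]
      gcongr
      exacts [hD' _, hC _, hC _]
  have lim2 : Tendsto (fun n => ∑' k : ℤ, (2 * (k : ℂ) + 1) * jcoeff y n k) atTop
      (𝓝 (2 * eulerE (y ^ 2) ^ 2)) := by
    simp_rw [fun n => (hasSum_jcoeff hy hy0 n).2.tsum_eq]
    exact ((tendsto_poch hx).pow 2).const_mul 2
  have h := tendsto_nhds_unique lim lim2
  rw [tsum_mul_right] at h
  have h' : ∑' k : ℤ, (2 * (k : ℂ) + 1) * ((-1) ^ k * y ^ (k ^ 2 + k)) =
      2 * eulerE (y ^ 2) ^ 3 := by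
    rw [← div_eq_mul_inv, div_eq_iff hE] at h
    rw [h]; ring
  rw [← h']
  exact hsum.of_norm.hasSum

/-! ### The Euler product at `-p` -/

/-- `E(-p) E(p) E(p⁴) = E(p²)³` for the Euler product `E`. -/
lemma eulerE_neg {p : ℂ} (hp : ‖p‖ < 1) :
    eulerE (-p) * (eulerE p * eulerE (p ^ 4)) = eulerE (p ^ 2) ^ 3 := by
  -- `O x` is the product over odd exponents, so that `E(x) = O(x) E(x²)`
  let O : ℂ → ℂ := fun x => ∏' n : ℕ, (1 - x ^ (2 * n + 1))
  have hO : ∀ x : ℂ, ‖x‖ < 1 → Multipliable fun n : ℕ => 1 - x ^ (2 * n + 1) := by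
    intro x hx
    refine multipliable_one_add_of_summable (f := fun n : ℕ ↦ -x ^ (2 * n + 1)) ?_
    have := (summable_geometric_of_lt_one (norm_nonneg x) hx).comp_injective
      (i := fun n : ℕ => 2 * n + 1) (fun a b h => by simpa using h)
    simpa [Function.comp_def] using this
  have hsq : ∀ x : ℂ, ‖x‖ < 1 → ‖x ^ 2‖ < 1 := fun x hx => by
    rw [norm_pow]; exact pow_lt_one₀ (norm_nonneg x) hx two_ne_zero
  have split : ∀ x : ℂ, ‖x‖ < 1 → eulerE x = O x * eulerE (x ^ 2) := by
    intro x hx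
    have h := tprod_even_mul_odd (f := fun n : ℕ => 1 - x ^ (n + 1)) (hO x hx)
      ((ModularForm.multipliable_one_sub_pow (hsq x hx)).congr fun n => by ring_nf)
    unfold eulerE
    rw [← h]
    congr 1
    refine tprod_congr fun n => by ring
  have mulO : O (-p) * O p = O (p ^ 2) := by
    have hn : ‖-p‖ < 1 := by rwa [norm_neg]
    refine ((hO _ hn).tprod_mul (hO _ hp)).symm.trans (tprod_congr fun n => ?_)
    rw [Odd.neg_pow (by simp)]
    ring
  have h1 := split p hp
  have h2 := split (-p) (by rwa [norm_neg])
  have h3 := split (p ^ 2) (hsq p hp)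
  rw [neg_sq] at h2
  rw [show (p ^ 2) ^ 2 = p ^ 4 by ring] at h3
  calc eulerE (-p) * (eulerE p * eulerE (p ^ 4))
      = (O (-p) * O p) * eulerE (p ^ 4) * eulerE (p ^ 2) ^ 2 := by rw [h1, h2]; ring
    _ = eulerE (p ^ 2) ^ 3 := by rw [mulO, ← h3]; ring

/-! ### Rearranging the double series -/

/-- Splitting a double series along two injections with complementary ranges. -/
lemma tsum_split {F : ℤ × ℤ → ℂ} (hF : Summable F) {i j : ℤ × ℤ → ℤ × ℤ}
    (hi : Function.Injective i) (hj : Function.Injective j)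
    (hd : ∀ p r, i p ≠ j r) (hc : ∀ s, (∃ p, i p = s) ∨ ∃ p, j p = s) :
    ∑' p, F p = ∑' p, F (i p) + ∑' p, F (j p) := by
  have h : IsCompl (Set.range i) (Set.range j) := by
    refine ⟨Set.disjoint_left.mpr ?_, codisjoint_iff.mpr (Set.eq_univ_of_forall hc)⟩
    rintro _ ⟨p, rfl⟩ ⟨r, hr⟩
    exact hd p r hr.symm
  have h1 := hi.hasSum_range_iff.mpr (hF.comp_injective hi).hasSum
  have h2 := hj.hasSum_range_iff.mpr (hF.comp_injective hj).hasSum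
  exact (h1.add_isCompl h h2).tsum_eq

lemma tsum_eq_zero_of_antisymm {F : ℤ × ℤ → ℂ} (e : ℤ × ℤ ≃ ℤ × ℤ) (h : ∀ p, F (e p) = -F p) :
    ∑' p, F p = 0 := by
  have h1 := e.tsum_eq F
  simp_rw [h, tsum_neg] at h1
  exact self_eq_neg.mp h1.symm

lemma summable_monomial {q : ℂ} (hq : ‖q‖ < 1) (hq0 : q ≠ 0) (i j : ℕ) :
    Summable fun p : ℤ × ℤ => (p.1 : ℂ) ^ i * (p.2 : ℂ) ^ j * q ^ (p.1 ^ 2 + 3 * p.2 ^ 2) := by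
  have := (summable_theta hq hq0 1 0 one_pos i).mul_of_nonneg
    (summable_theta hq hq0 3 0 (by norm_num) j) (fun _ => norm_nonneg _) (fun _ => norm_nonneg _)
  refine Summable.of_norm (this.congr fun p => ?_)
  simp only [one_mul, zero_mul, add_zero]
  rw [← norm_mul, zpow_add₀ hq0]
  congr 1
  ring

/-- The theta series terms `(u² - 3v²)/2 · q^{u² + 3v²}` attached to the form `u² + 3v²`. -/
noncomputable def gterm (q : ℂ) (p : ℤ × ℤ) : ℂ :=
  (((p.1 : ℂ) ^ 2 - 3 * (p.2 : ℂ) ^ 2) / 2) * q ^ (p.1 ^ 2 + 3 * p.2 ^ 2)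

/-- The mixed terms `u v · q^{u² + 3v²}`, odd in each variable. -/
noncomputable def hterm (q : ℂ) (p : ℤ × ℤ) : ℂ :=
  ((p.1 : ℂ) * (p.2 : ℂ)) * q ^ (p.1 ^ 2 + 3 * p.2 ^ 2)

lemma summable_gterm {q : ℂ} (hq : ‖q‖ < 1) (hq0 : q ≠ 0) : Summable (gterm q) := by
  refine (((summable_monomial hq hq0 2 0).mul_left (1 / 2)).sub
    ((summable_monomial hq hq0 0 2).mul_left (3 / 2))).congr fun p => ?_
  simp only [gterm, pow_zero]; ring

lemma summable_hterm {q : ℂ} (hq : ‖q‖ < 1) (hq0 : q ≠ 0) : Summable (hterm q) := by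
  refine (summable_monomial hq hq0 1 1).congr fun p => ?_
  simp only [hterm, pow_one]

/-- The terms of the product of two Jacobi series, at `(iq)² = -q²` and `(iq³)² = -q⁶`. -/
noncomputable def fterm (q : ℂ) (p : ℤ × ℤ) : ℂ :=
  q * (((2 * (p.1 : ℂ) + 1) * ((-1) ^ p.1 * (Complex.I * q) ^ (p.1 ^ 2 + p.1))) *
    ((2 * (p.2 : ℂ) + 1) * ((-1) ^ p.2 * (Complex.I * q ^ 3) ^ (p.2 ^ 2 + p.2))))

lemma hasSum_fterm {q : ℂ} (hq : ‖q‖ < 1) (hq0 : q ≠ 0) :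
    HasSum (fterm q) (4 * (q * eulerE (-q ^ 2) ^ 3 * eulerE (-q ^ 6) ^ 3)) := by
  have hq3 : ‖q ^ 3‖ < 1 := by
    rw [norm_pow]; exact pow_lt_one₀ (norm_nonneg q) hq three_ne_zero
  have h1 := jacobi_cube (y := Complex.I * q) (by simpa using hq)
    (mul_ne_zero Complex.I_ne_zero hq0)
  have h2 := jacobi_cube (y := Complex.I * q ^ 3) (by simpa using hq3)
    (mul_ne_zero Complex.I_ne_zero (pow_ne_zero 3 hq0))
  rw [mul_pow, Complex.I_sq, neg_one_mul] at h1 h2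
  rw [show (q ^ 3) ^ 2 = q ^ 6 by ring] at h2
  have hs := summable_mul_of_summable_norm h1.summable.norm h2.summable.norm
  have h := (h1.mul h2 hs).mul_left q
  have e : 4 * (q * eulerE (-q ^ 2) ^ 3 * eulerE (-q ^ 6) ^ 3) =
      q * (2 * eulerE (-q ^ 2) ^ 3 * (2 * eulerE (-q ^ 6) ^ 3)) := by
    ring
  rw [e]
  exact h

/-- The involution `k ↦ -1 - k`, i.e. `2k + 1 ↦ -(2k + 1)`, preserves the terms. -/
lemma fterm_reflect (q : ℂ) (a b : ℤ) : fterm q (a, -1 - b) = fterm q (a, b) := by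
  have e : (-1 - b) ^ 2 + (-1 - b) = b ^ 2 + b := by ring
  have s : (-1 : ℂ) ^ (-1 - b) = -(-1) ^ b := by
    rw [zpow_sub₀ (by norm_num), div_eq_mul_inv, ← inv_zpow]
    norm_num
  simp only [fterm, e, s]
  push_cast
  ring

/-- With `u = 2k + 1 + v` one has `2(k + 2v) + 1 = u + 3v`, `2k + 1 = u - v` and
`(u + 3v)² + 3 (u - v)² = 4 (u² + 3v²)`. -/
lemma fterm_diag {q : ℂ} (hq0 : q ≠ 0) (k v : ℤ) :
    fterm q (k + 2 * v, k) = 2 * (-1) ^ v *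
      (gterm q (2 * k + 1 + v, v) + hterm q (2 * k + 1 + v, v)) := by
  have hI : Complex.I ^ ((k + 2 * v) ^ 2 + (k + 2 * v)) * Complex.I ^ (k ^ 2 + k) = (-1) ^ v := by
    rw [← zpow_add₀ Complex.I_ne_zero,
      show (k + 2 * v) ^ 2 + (k + 2 * v) + (k ^ 2 + k) =
        2 * (k * (k + 1) + 2 * (k * v + v ^ 2) + v) by ring,
      zpow_mul, show Complex.I ^ (2 : ℤ) = -1 from by exact_mod_cast Complex.I_sq,
      zpow_add₀ (by norm_num), Even.neg_one_zpow ((Int.even_mul_succ_self k).add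
        (even_two_mul _)), one_mul]
  have hs : (-1 : ℂ) ^ (k + 2 * v) * (-1) ^ k = 1 := by
    rw [← zpow_add₀ (by norm_num), show k + 2 * v + k = 2 * (k + v) by ring,
      Even.neg_one_zpow (even_two_mul _)]
  have hqq : q * (q ^ ((k + 2 * v) ^ 2 + (k + 2 * v)) * (q ^ 3) ^ (k ^ 2 + k)) =
      q ^ ((2 * k + 1 + v) ^ 2 + 3 * v ^ 2) := by
    rw [← zpow_natCast q 3, ← zpow_mul, ← zpow_add₀ hq0, ← zpow_one_add₀ hq0]
    congr 1; push_cast; ring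
  simp only [fterm, gterm, hterm, mul_zpow]
  rw [← hI, ← hqq]
  push_cast
  linear_combination (q * (q ^ ((k + 2 * v) ^ 2 + (k + 2 * v)) * (q ^ 3) ^ (k ^ 2 + k))) *
    (2 * ((k : ℂ) + 2 * v) + 1) * (2 * k + 1) *
    (Complex.I ^ ((k + 2 * v) ^ 2 + (k + 2 * v)) * Complex.I ^ (k ^ 2 + k)) * hs

/-- Comparison of the product of Jacobi series with the theta series. -/
lemma tsum_fterm {q : ℂ} (hq : ‖q‖ < 1) (hq0 : q ≠ 0) :
    ∑' p, fterm q p = 4 * (∑' p : ℤ × ℤ, gterm q (2 * p.1 + 1, 2 * p.2) -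
      ∑' p : ℤ × ℤ, gterm q (2 * p.1, 2 * p.2 + 1)) := by
  have hf := (hasSum_fterm hq hq0).summable
  have i1 : Function.Injective fun p : ℤ × ℤ => (p.1 + 2 * p.2, p.1) := by
    rintro ⟨a, b⟩ ⟨c, d⟩ h; simp only [Prod.mk.injEq] at h ⊢; omega
  have j1 : Function.Injective fun p : ℤ × ℤ => (p.1 + 2 * p.2, -1 - p.1) := by
    rintro ⟨a, b⟩ ⟨c, d⟩ h; simp only [Prod.mk.injEq] at h ⊢; omega
  have S1 := tsum_split hf i1 j1
    (by rintro ⟨a, b⟩ ⟨c, d⟩ h; simp only [Prod.mk.injEq] at h; omega)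
    (by
      rintro ⟨a, b⟩
      rcases Int.emod_two_eq_zero_or_one (a - b) with h | h
      · exact Or.inl ⟨(b, (a - b) / 2), by simp only [Prod.mk.injEq, and_true]; omega⟩
      · exact Or.inr ⟨(-1 - b, (a + b + 1) / 2), by simp only [Prod.mk.injEq]; omega⟩)
  simp only [fterm_reflect] at S1
  have hi := hf.comp_injective i1
  have i2 : Function.Injective fun p : ℤ × ℤ => (p.1 - p.2, 2 * p.2) := by
    rintro ⟨a, b⟩ ⟨c, d⟩ h; simp only [Prod.mk.injEq] at h ⊢; omega
  have j2 : Function.Injective fun p : ℤ × ℤ => (p.1 - p.2 - 1, 2 * p.2 + 1) := by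
    rintro ⟨a, b⟩ ⟨c, d⟩ h; simp only [Prod.mk.injEq] at h ⊢; omega
  have S2 := tsum_split hi i2 j2
    (by rintro ⟨a, b⟩ ⟨c, d⟩ h; simp only [Prod.mk.injEq] at h; omega)
    (by
      rintro ⟨a, b⟩
      rcases Int.emod_two_eq_zero_or_one b with h | h
      · exact Or.inl ⟨(a + b / 2, b / 2), by simp only [Prod.mk.injEq]; omega⟩
      · exact Or.inr ⟨(a + b / 2 + 1, b / 2), by simp only [Prod.mk.injEq]; omega⟩)
  simp only [Function.comp_apply, fterm_diag hq0] at S2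
  have i3 : Function.Injective fun p : ℤ × ℤ => (2 * p.1 + 1, 2 * p.2) := by
    rintro ⟨a, b⟩ ⟨c, d⟩ h; simp only [Prod.mk.injEq] at h ⊢; omega
  have j3 : Function.Injective fun p : ℤ × ℤ => (2 * p.1, 2 * p.2 + 1) := by
    rintro ⟨a, b⟩ ⟨c, d⟩ h; simp only [Prod.mk.injEq] at h ⊢; omega
  have hg1 := (summable_gterm hq hq0).comp_injective i3
  have hg2 := (summable_gterm hq hq0).comp_injective j3
  have hh1 := (summable_hterm hq hq0).comp_injective i3
  have hh2 := (summable_hterm hq hq0).comp_injective j3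
  -- the mixed terms cancel under `v ↦ -v`, respectively `u ↦ -u`
  have z1 : ∑' p : ℤ × ℤ, hterm q (2 * p.1 + 1, 2 * p.2) = 0 :=
    tsum_eq_zero_of_antisymm ((Equiv.refl ℤ).prodCongr (Equiv.neg ℤ)) fun p => by
      simp [hterm]
  have z2 : ∑' p : ℤ × ℤ, hterm q (2 * p.1, 2 * p.2 + 1) = 0 :=
    tsum_eq_zero_of_antisymm ((Equiv.neg ℤ).prodCongr (Equiv.refl ℤ)) fun p => by
      simp [hterm]
  have t1 : ∑' p : ℤ × ℤ, 2 * (-1) ^ (2 * p.2) *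
      (gterm q (2 * (p.1 - p.2) + 1 + 2 * p.2, 2 * p.2) +
        hterm q (2 * (p.1 - p.2) + 1 + 2 * p.2, 2 * p.2)) =
      2 * ∑' p : ℤ × ℤ, gterm q (2 * p.1 + 1, 2 * p.2) := by
    rw [← add_zero (∑' p : ℤ × ℤ, gterm q (2 * p.1 + 1, 2 * p.2)), ← z1]
    refine Eq.trans (tsum_congr fun p => ?_) (((hg1.hasSum.add hh1.hasSum).mul_left 2).tsum_eq)
    rw [Even.neg_one_zpow (even_two_mul _),
      show 2 * (p.1 - p.2) + 1 + 2 * p.2 = 2 * p.1 + 1 by ring, mul_one]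
    rfl
  have t2 : ∑' p : ℤ × ℤ, 2 * (-1) ^ (2 * p.2 + 1) *
      (gterm q (2 * (p.1 - p.2 - 1) + 1 + (2 * p.2 + 1), 2 * p.2 + 1) +
        hterm q (2 * (p.1 - p.2 - 1) + 1 + (2 * p.2 + 1), 2 * p.2 + 1)) =
      -2 * ∑' p : ℤ × ℤ, gterm q (2 * p.1, 2 * p.2 + 1) := by
    rw [← add_zero (∑' p : ℤ × ℤ, gterm q (2 * p.1, 2 * p.2 + 1)), ← z2]
    refine Eq.trans (tsum_congr fun p => ?_) (((hg2.hasSum.add hh2.hasSum).mul_left (-2)).tsum_eq)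
    rw [Odd.neg_one_zpow (odd_two_mul_add_one _),
      show 2 * (p.1 - p.2 - 1) + 1 + (2 * p.2 + 1) = 2 * p.1 by ring, mul_neg_one]
    rfl
  rw [t1, t2] at S2
  have hc : ∑' p : ℤ × ℤ, fterm q (p.1 + 2 * p.2, p.1) =
      ∑' p : ℤ × ℤ, 2 * (-1) ^ p.2 *
        (gterm q (2 * p.1 + 1 + p.2, p.2) + hterm q (2 * p.1 + 1 + p.2, p.2)) :=
    tsum_congr fun p => fterm_diag hq0 _ _
  rw [S1, hc, S2]
  ring

/-- The part of the right-hand side with `m` even cancels: both forms become `4k² + 12n²`. -/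
lemma hasSum_theta_pair {q : ℂ} (hq : ‖q‖ < 1) (hq0 : q ≠ 0) :
    HasSum (fun p : ℤ × ℤ => gterm q (p.1, 2 * p.2) - gterm q (2 * p.2, p.1))
      (∑' p : ℤ × ℤ, gterm q (2 * p.1 + 1, 2 * p.2) -
        ∑' p : ℤ × ℤ, gterm q (2 * p.1, 2 * p.2 + 1)) := by
  have i1 : Function.Injective fun p : ℤ × ℤ => (p.1, 2 * p.2) := by
    rintro ⟨a, b⟩ ⟨c, d⟩ h; simp only [Prod.mk.injEq] at h ⊢; omega
  have j1 : Function.Injective fun p : ℤ × ℤ => (2 * p.2, p.1) := by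
    rintro ⟨a, b⟩ ⟨c, d⟩ h; simp only [Prod.mk.injEq] at h ⊢; omega
  have h1 := (summable_gterm hq hq0).comp_injective i1
  have h2 := (summable_gterm hq hq0).comp_injective j1
  have i2 : Function.Injective fun p : ℤ × ℤ => (2 * p.1, p.2) := by
    rintro ⟨a, b⟩ ⟨c, d⟩ h; simp only [Prod.mk.injEq] at h ⊢; omega
  have j2 : Function.Injective fun p : ℤ × ℤ => (2 * p.1 + 1, p.2) := by
    rintro ⟨a, b⟩ ⟨c, d⟩ h; simp only [Prod.mk.injEq] at h ⊢; omega
  have hd : ∀ p r : ℤ × ℤ, (2 * p.1, p.2) ≠ (2 * r.1 + 1, r.2) := by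
    rintro ⟨a, b⟩ ⟨c, d⟩ h; simp only [Prod.mk.injEq] at h; omega
  have hc : ∀ s : ℤ × ℤ, (∃ p : ℤ × ℤ, (2 * p.1, p.2) = s) ∨
      ∃ p : ℤ × ℤ, (2 * p.1 + 1, p.2) = s := by
    rintro ⟨a, b⟩
    rcases Int.emod_two_eq_zero_or_one a with h | h
    · exact Or.inl ⟨(a / 2, b), by simp only [Prod.mk.injEq, and_true]; omega⟩
    · exact Or.inr ⟨(a / 2, b), by simp only [Prod.mk.injEq, and_true]; omega⟩
  have S1 := tsum_split h1 i2 j2 hd hc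
  have S2 := tsum_split h2 i2 j2 hd hc
  simp only [Function.comp_apply] at S1 S2
  have e1 : ∑' p : ℤ × ℤ, gterm q (2 * p.2, 2 * p.1) = ∑' p : ℤ × ℤ, gterm q (2 * p.1, 2 * p.2) :=
    (Equiv.prodComm ℤ ℤ).tsum_eq fun p : ℤ × ℤ => gterm q (2 * p.1, 2 * p.2)
  have e2 : ∑' p : ℤ × ℤ, gterm q (2 * p.2, 2 * p.1 + 1) =
      ∑' p : ℤ × ℤ, gterm q (2 * p.1, 2 * p.2 + 1) :=
    (Equiv.prodComm ℤ ℤ).tsum_eq fun p : ℤ × ℤ => gterm q (2 * p.1, 2 * p.2 + 1)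
  have h := h1.hasSum.sub h2.hasSum
  simp only [Function.comp_apply] at h
  rw [S1, S2, e1, e2, add_sub_add_left_eq_sub] at h
  exact h

/-! ### The eta quotient -/

lemma dedekindEta_natCast_mul (τ : ℂ) (c : ℕ) :
    dedekindEta (c * τ) = Complex.exp (2 * (Real.pi : ℂ) * Complex.I * τ / 24) ^ c *
      eulerE (Complex.exp (2 * (Real.pi : ℂ) * Complex.I * τ) ^ c) := by
  unfold dedekindEta eulerE
  rw [← Complex.exp_nat_mul, ← Complex.exp_nat_mul]
  congr 3
  · ring
  · funext n; congr 3; ring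

theorem eta_g48_theta (τ : ℂ) (hτ : 0 < τ.im) :
    Summable (fun p : ℤ × ℤ =>
      (((p.1 : ℂ) ^ 2 - 12 * (p.2 : ℂ) ^ 2) / 2) *
          Complex.exp (2 * (Real.pi : ℂ) * Complex.I * τ) ^ (p.1 ^ 2 + 12 * p.2 ^ 2) +
        ((3 * (p.1 : ℂ) ^ 2 - 4 * (p.2 : ℂ) ^ 2) / 2) *
          Complex.exp (2 * (Real.pi : ℂ) * Complex.I * τ) ^ (3 * p.1 ^ 2 + 4 * p.2 ^ 2)) ∧
    dedekindEta (4 * τ) ^ 9 * dedekindEta (12 * τ) ^ 9 /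
        (dedekindEta (2 * τ) ^ 3 * dedekindEta (6 * τ) ^ 3 * dedekindEta (8 * τ) ^ 3 *
          dedekindEta (24 * τ) ^ 3) =
      ∑' p : ℤ × ℤ,
        ((((p.1 : ℂ) ^ 2 - 12 * (p.2 : ℂ) ^ 2) / 2) *
            Complex.exp (2 * (Real.pi : ℂ) * Complex.I * τ) ^ (p.1 ^ 2 + 12 * p.2 ^ 2) +
          ((3 * (p.1 : ℂ) ^ 2 - 4 * (p.2 : ℂ) ^ 2) / 2) *
            Complex.exp (2 * (Real.pi : ℂ) * Complex.I * τ) ^ (3 * p.1 ^ 2 + 4 * p.2 ^ 2)) := by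

  set q := Complex.exp (2 * (Real.pi : ℂ) * Complex.I * τ) with hqdef
  set ζ := Complex.exp (2 * (Real.pi : ℂ) * Complex.I * τ / 24) with hζdef
  have hq0 : q ≠ 0 := Complex.exp_ne_zero _
  have hζ0 : ζ ≠ 0 := Complex.exp_ne_zero _
  have hq : ‖q‖ < 1 := UpperHalfPlane.norm_exp_two_pi_I_lt_one ⟨τ, hτ⟩
  have hζ : ζ ^ 24 = q := by
    rw [hζdef, hqdef, ← Complex.exp_nat_mul]; congr 1; push_cast; ring
  have hqn : ∀ n : ℕ, n ≠ 0 → ‖q ^ n‖ < 1 := fun n hn => by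
    rw [norm_pow]; exact pow_lt_one₀ (norm_nonneg q) hq hn
  have hterms : (fun p : ℤ × ℤ =>
      (((p.1 : ℂ) ^ 2 - 12 * (p.2 : ℂ) ^ 2) / 2) * q ^ (p.1 ^ 2 + 12 * p.2 ^ 2) +
        ((3 * (p.1 : ℂ) ^ 2 - 4 * (p.2 : ℂ) ^ 2) / 2) * q ^ (3 * p.1 ^ 2 + 4 * p.2 ^ 2)) =
      fun p : ℤ × ℤ => gterm q (p.1, 2 * p.2) - gterm q (2 * p.2, p.1) := by
    funext p
    simp only [gterm]
    rw [show p.1 ^ 2 + 3 * (2 * p.2) ^ 2 = p.1 ^ 2 + 12 * p.2 ^ 2 by ring,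
      show (2 * p.2) ^ 2 + 3 * p.1 ^ 2 = 3 * p.1 ^ 2 + 4 * p.2 ^ 2 by ring]
    push_cast
    ring
  rw [hterms]
  have hsum := hasSum_theta_pair hq hq0
  refine ⟨hsum.summable, ?_⟩
  have hprod := (hasSum_fterm hq hq0).tsum_eq
  rw [tsum_fterm hq hq0] at hprod
  rw [hsum.tsum_eq, mul_left_cancel₀ (by norm_num : (4 : ℂ) ≠ 0) hprod]
  have n2 := eulerE_neg (hqn 2 two_ne_zero)
  have n6 := eulerE_neg (hqn 6 (by norm_num))
  simp only [← pow_mul, Nat.reduceMul] at n2 n6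
  have d2 := eulerE_ne_zero (hqn 2 two_ne_zero)
  have d6 := eulerE_ne_zero (hqn 6 (by norm_num))
  have d8 := eulerE_ne_zero (hqn 8 (by norm_num))
  have d24 := eulerE_ne_zero (hqn 24 (by norm_num))
  have eta := dedekindEta_natCast_mul τ
  rw [← hqdef, ← hζdef] at eta
  have η2 := eta 2
  have η4 := eta 4
  have η6 := eta 6
  have η8 := eta 8
  have η12 := eta 12
  have η24 := eta 24
  push_cast at η2 η4 η6 η8 η12 η24
  rw [η2, η4, η6, η8, η12, η24, div_eq_iff (by simp [hζ0, d2, d6, d8, d24])]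
  calc (ζ ^ 4 * eulerE (q ^ 4)) ^ 9 * (ζ ^ 12 * eulerE (q ^ 12)) ^ 9
      = ζ ^ 24 * ζ ^ 120 * (eulerE (q ^ 4) ^ 3) ^ 3 * (eulerE (q ^ 12) ^ 3) ^ 3 := by ring
    _ = q * ζ ^ 120 * (eulerE (q ^ 4) ^ 3) ^ 3 * (eulerE (q ^ 12) ^ 3) ^ 3 := by rw [hζ]
    _ = _ := by rw [← n2, ← n6]; ring
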